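/- For n ≥ 1 and real numbers a, b with √(n−1) < a ≤ √n and b² = a²(n − a²)/(n(a² − n + 1)), the map f: ℝ^n → ℝ^{2n+1}, f(x_1,…,x_n) = (1/√n)(cos(a x_1), sin(a x_1), …, cos(a x_n), sin(a x_n), b(x_1+⋯+x_n)), is an isometric immersion (with respect to a suitable flat metric on ℝ^n) whose image lies in 𝕊^{2n−1} × ℝ ⊂ ℝ^{2n+1}, and satisfies Δf = -a²(f − ⟨f, ∂/∂t⟩ ∂/∂t), where ∂/∂t is the unit vector in the last coordinate direction. -/

import Mathlib

noncomputable section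

open scoped RealInnerProductSpace

abbrev Euc (n : ℕ) := EuclideanSpace ℝ (Fin n)

/-- Partial derivative in the `i`-th coordinate direction. -/
def pd {n : ℕ} {V : Type*} [NormedAddCommGroup V] [NormedSpace ℝ V]
    (i : Fin n) (f : Euc n → V) (x : Euc n) : V :=
  fderiv ℝ f x (EuclideanSpace.single i 1)

/-- The induced (first fundamental form) metric of an immersion `F`. -/
def indMetric {m N : ℕ} (F : Euc m → Euc N) (x : Euc m) :
    Matrix (Fin m) (Fin m) ℝ :=
  Matrix.of fun i j => ⟪pd i F x, pd j F x⟫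

/-- Orthogonal projection of `v ∈ ℝ^N` onto the tangent space `dF_x(T_x M)`. -/
def tproj {m N : ℕ} (F : Euc m → Euc N) (x : Euc m) (v : Euc N) : Euc N :=
  ∑ i, ∑ j, ((indMetric F x)⁻¹ i j * ⟪v, pd i F x⟫) • pd j F x

/-- Christoffel symbols of the induced metric. -/
def christoffel {m N : ℕ} (F : Euc m → Euc N) (x : Euc m) (k i j : Fin m) : ℝ :=
  (1 / 2) * ∑ l, (indMetric F x)⁻¹ k l *
    (pd i (fun y => indMetric F y j l) x + pd j (fun y => indMetric F y i l) x
      - pd l (fun y => indMetric F y i j) x)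

/-- Laplace–Beltrami operator of the metric induced by `F`, on scalar functions. -/
def lap {m N : ℕ} (F : Euc m → Euc N) (h : Euc m → ℝ) (x : Euc m) : ℝ :=
  ∑ i, ∑ j, (indMetric F x)⁻¹ i j *
    (pd i (fun y => pd j h y) x - ∑ k, christoffel F x k i j * pd k h x)

/-- Componentwise Laplace–Beltrami operator on `ℝ^N`-valued functions. -/
def lapV {m N : ℕ} (F : Euc m → Euc N) (G : Euc m → Euc N) (x : Euc m) : Euc N :=
  (WithLp.equiv 2 (Fin N → ℝ)).symm fun a => lap F (fun y => G y a) x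

/-- Mean curvature vector of the immersion `F` into Euclidean space. -/
def meanCurv {m N : ℕ} (F : Euc m → Euc N) (x : Euc m) : Euc N :=
  (m : ℝ)⁻¹ • ∑ i, ∑ j, (indMetric F x)⁻¹ i j •
    (pd i (fun y => pd j F y) x - tproj F x (pd i (fun y => pd j F y) x))

/-- `F` is a smooth immersion (hence an isometric immersion of `M` with the
induced metric into Euclidean space). -/
def IsImmersion {m N : ℕ} (F : Euc m → Euc N) : Prop :=
  ContDiff ℝ (⊤ : ℕ∞) F ∧ ∀ x, Function.Injective (fderiv ℝ F x)

/-- Projection of `ℝ^{n+k}` onto the first `n` coordinates. -/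
def projFst {n k : ℕ} (v : Euc (n + k)) : Euc (n + k) :=
  (WithLp.equiv 2 (Fin (n + k) → ℝ)).symm fun a => if (a : ℕ) < n then v a else 0

/-- Projection of `ℝ^{n+k}` onto the last `k` coordinates. -/
def projSnd {n k : ℕ} (v : Euc (n + k)) : Euc (n + k) :=
  (WithLp.equiv 2 (Fin (n + k) → ℝ)).symm fun a => if (a : ℕ) < n then 0 else v a

/-!
Translations of `ℝⁿ` act on the graph of a linear height `L` over a product of `n` circles by
rotations and vertical translations, so the induced metric has constant coefficients: it is the
rank-one perturbation `(r a)² I + ℓ ℓᵀ` of a scalar matrix, where `ℓ` is the vector of `L`. The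
Christoffel symbols vanish, the Laplacian kills the linear height, and a function of the single
variable `x_k` only sees the diagonal entry `g^{kk}` of the inverse metric, which the
Sherman–Morrison formula computes. When all `|ℓ_k|` agree these entries agree, so the circular
coordinates are eigenfunctions for one common eigenvalue; the relation between `a` and `b` says
that this eigenvalue is `a²`.
-/

section Matrix

open Matrix

theorem inv_smul_one_add_vecMulVec {ι K : Type*} [Fintype ι] [DecidableEq ι] [Field K] {α : K}
    {u v : ι → K} (hα : α ≠ 0) (h : α + v ⬝ᵥ u ≠ 0) :
    (α • (1 : Matrix ι ι K) + vecMulVec u v)⁻¹ =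
      α⁻¹ • (1 - (α + v ⬝ᵥ u)⁻¹ • vecMulVec u v) := by
  apply inv_eq_right_inv
  have hsq : vecMulVec u v * vecMulVec u v = (v ⬝ᵥ u) • vecMulVec u v := by
    rw [vecMulVec_mul_vecMulVec, vecMulVec_smul]
  rw [mul_smul_comm, add_mul, mul_sub, mul_sub, mul_smul_comm, mul_smul_comm, hsq]
  simp only [smul_mul_assoc, one_mul, mul_one]
  match_scalars
  · field_simp
  · field_simp
    ring

end Matrix

section EvenOdd

variable {n : ℕ}

theorem sum_fin_two_mul {M : Type*} [AddCommMonoid M] (F : Fin (2 * n) → M) :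
    ∑ i, F i = ∑ k : Fin n, (F ⟨2 * k, by omega⟩ + F ⟨2 * k + 1, by omega⟩) := by
  induction n with
  | zero => rfl
  | succ n ih =>
    calc ∑ i, F i
        = ∑ i : Fin (2 * n), F ⟨i, by omega⟩ + F ⟨2 * n, by omega⟩ + F ⟨2 * n + 1, by omega⟩ := by
          refine (Fin.sum_univ_castSucc (n := 2 * n + 1) F).trans ?_
          rw [Fin.sum_univ_castSucc]
          rfl
      _ = ∑ k : Fin (n + 1), (F ⟨2 * k, by omega⟩ + F ⟨2 * k + 1, by omega⟩) := by
          rw [ih, Fin.sum_univ_castSucc, add_assoc]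
          rfl

theorem sum_fin_two_mul_add_one {M : Type*} [AddCommMonoid M] (F : Fin (2 * n + 1) → M) :
    ∑ i, F i =
      ∑ k : Fin n, (F ⟨2 * k, by omega⟩ + F ⟨2 * k + 1, by omega⟩) + F (Fin.last (2 * n)) := by
  rw [Fin.sum_univ_castSucc, sum_fin_two_mul]
  rfl

theorem fin_val_div_two_lt {i : Fin (2 * n + 1)} (h : (i : ℕ) < 2 * n) : (i : ℕ) / 2 < n := by
  omega

theorem fin_two_mul_add_one_cases {P : Fin (2 * n + 1) → Prop}
    (even : ∀ k : Fin n, P ⟨2 * k, by omega⟩) (odd : ∀ k : Fin n, P ⟨2 * k + 1, by omega⟩)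
    (last : P (Fin.last (2 * n))) (i : Fin (2 * n + 1)) : P i := by
  induction i using Fin.lastCases with
  | last => exact last
  | cast i =>
    obtain ⟨k, hk | hk⟩ := Nat.even_or_odd' (i : ℕ)
    · have hi : i.castSucc = ⟨2 * (⟨k, by omega⟩ : Fin n), by omega⟩ := Fin.ext hk
      exact hi ▸ even _
    · have hi : i.castSucc = ⟨2 * (⟨k, by omega⟩ : Fin n) + 1, by omega⟩ := Fin.ext hk
      exact hi ▸ odd _

end EvenOdd

section Derivative

variable {n : ℕ}

theorem fderiv_euclidean_apply {E : Type*} [NormedAddCommGroup E] [NormedSpace ℝ E] {N : ℕ}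
    {f : E → Euc N} {x : E} (hf : DifferentiableAt ℝ f x) (v : E) (i : Fin N) :
    fderiv ℝ f x v i = fderiv ℝ (fun y => f y i) x v :=
  (congrArg (· v)
    ((EuclideanSpace.proj (𝕜 := ℝ) i).hasFDerivAt.comp x hf.hasFDerivAt).fderiv).symm

theorem fderiv_comp_coord {φ : ℝ → ℝ} {k : Fin n} {x : Euc n}
    (hφ : DifferentiableAt ℝ φ (x k)) (v : Euc n) :
    fderiv ℝ (fun y : Euc n => φ (y k)) x v = deriv φ (x k) * v k := by
  have hk : HasFDerivAt (fun y : Euc n => y k) (EuclideanSpace.proj (𝕜 := ℝ) k) x :=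
    (EuclideanSpace.proj (𝕜 := ℝ) k).hasFDerivAt
  have hcomp : HasFDerivAt (fun y : Euc n => φ (y k))
      (deriv φ (x k) • EuclideanSpace.proj (𝕜 := ℝ) k) x := hφ.hasDerivAt.comp_hasFDerivAt x hk
  rw [hcomp.fderiv]
  rfl

theorem pd_comp_coord {φ : ℝ → ℝ} {k : Fin n} {x : Euc n} (hφ : DifferentiableAt ℝ φ (x k))
    (i : Fin n) :
    pd i (fun y : Euc n => φ (y k)) x = if k = i then deriv φ (x k) else 0 := by
  simp [pd, fderiv_comp_coord hφ]

theorem deriv_const_mul_cos_mul (r a : ℝ) :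
    deriv (fun t => r * Real.cos (a * t)) = fun t => -(r * a) * Real.sin (a * t) := by
  ext t
  have h : HasDerivAt (fun t => a * t) (a * 1) t := (hasDerivAt_id t).const_mul a
  rw [(h.cos.const_mul r).deriv]
  ring

theorem deriv_const_mul_sin_mul (r a : ℝ) :
    deriv (fun t => r * Real.sin (a * t)) = fun t => r * a * Real.cos (a * t) := by
  ext t
  have h : HasDerivAt (fun t => a * t) (a * 1) t := (hasDerivAt_id t).const_mul a
  rw [(h.sin.const_mul r).deriv]
  ring

theorem deriv_deriv_const_mul_cos_mul (r a t : ℝ) :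
    deriv (deriv fun t => r * Real.cos (a * t)) t = -a ^ 2 * (r * Real.cos (a * t)) := by
  rw [deriv_const_mul_cos_mul, deriv_const_mul_sin_mul]
  ring

theorem deriv_deriv_const_mul_sin_mul (r a t : ℝ) :
    deriv (deriv fun t => r * Real.sin (a * t)) t = -a ^ 2 * (r * Real.sin (a * t)) := by
  rw [deriv_const_mul_sin_mul, deriv_const_mul_cos_mul]
  ring

end Derivative

section ConstantMetric

variable {m N : ℕ} {F : Euc m → Euc N} {G : Matrix (Fin m) (Fin m) ℝ}

theorem christoffel_eq_zero_of_indMetric_eq (hG : ∀ x, indMetric F x = G) (x : Euc m)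
    (k i j : Fin m) : christoffel F x k i j = 0 := by
  simp [christoffel, hG, pd]

theorem lap_of_indMetric_eq (hG : ∀ x, indMetric F x = G) (h : Euc m → ℝ) (x : Euc m) :
    lap F h x = ∑ i, ∑ j, G⁻¹ i j * pd i (fun y => pd j h y) x := by
  simp [lap, christoffel_eq_zero_of_indMetric_eq hG, hG]

theorem lap_comp_coord_of_indMetric_eq (hG : ∀ x, indMetric F x = G) {φ : ℝ → ℝ}
    (hφ : ContDiff ℝ 2 φ) (k : Fin m) (x : Euc m) :
    lap F (fun y => φ (y k)) x = G⁻¹ k k * deriv (deriv φ) (x k) := by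
  have hpd (i j : Fin m) : pd i (fun y => pd j (fun z : Euc m => φ (z k)) y) x =
      if k = j then if k = i then deriv (deriv φ) (x k) else 0 else 0 := by
    simp only [pd_comp_coord (hφ.differentiable two_ne_zero _)]
    by_cases hj : k = j
    · simp only [if_pos hj, pd_comp_coord (hφ.differentiable_deriv_two _)]
    · simp [if_neg hj, pd]
  simp [lap_of_indMetric_eq hG, hpd]

theorem lap_continuousLinearMap_of_indMetric_eq (hG : ∀ x, indMetric F x = G)
    (L : Euc m →L[ℝ] ℝ) (x : Euc m) : lap F L x = 0 := by
  simp [lap_of_indMetric_eq hG, pd]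

end ConstantMetric

/-- The graph of the linear height `L` over the product of `n` circles of radius `r`, each run
through with angular speed `a`: the map `x ↦ (r cos ax₁, r sin ax₁, …, r cos axₙ, r sin axₙ, L x)`.
Coordinates are numbered from `0`, so the `k`-th circle occupies `2k` and `2k + 1`. -/
def torusGraph {n : ℕ} (r a : ℝ) (L : Euc n →L[ℝ] ℝ) (x : Euc n) : Euc (2 * n + 1) :=
  WithLp.toLp 2 fun i =>
    if h : (i : ℕ) < 2 * n then
      r * if (i : ℕ) % 2 = 0 then Real.cos (a * x ⟨(i : ℕ) / 2, fin_val_div_two_lt h⟩)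
        else Real.sin (a * x ⟨(i : ℕ) / 2, fin_val_div_two_lt h⟩)
    else L x

section TorusGraph

open Matrix

variable {n : ℕ} (r a : ℝ) (L : Euc n →L[ℝ] ℝ)

theorem torusGraph_apply_two_mul (x : Euc n) (k : Fin n) :
    torusGraph r a L x ⟨2 * k, by omega⟩ = r * Real.cos (a * x k) := by
  simp [torusGraph]

theorem torusGraph_apply_two_mul_add_one (x : Euc n) (k : Fin n) :
    torusGraph r a L x ⟨2 * k + 1, by omega⟩ = r * Real.sin (a * x k) := by
  have hlt : 2 * (k : ℕ) + 1 < 2 * n := by omega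
  have hdiv : (2 * (k : ℕ) + 1) / 2 = k := by omega
  have hmod : (2 * (k : ℕ) + 1) % 2 = 1 := by omega
  simp [torusGraph, hlt, hdiv, hmod]

theorem torusGraph_apply_last (x : Euc n) : torusGraph r a L x (Fin.last (2 * n)) = L x := by
  simp [torusGraph]

theorem contDiff_torusGraph {p : WithTop ℕ∞} : ContDiff ℝ p (torusGraph r a L) := by
  have hcoord (k : Fin n) : ContDiff ℝ p fun y : Euc n => a * y k :=
    contDiff_const.mul (EuclideanSpace.proj (𝕜 := ℝ) k).contDiff
  rw [contDiff_euclidean]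
  refine fin_two_mul_add_one_cases (fun k => ?_) (fun k => ?_) ?_
  · simpa only [torusGraph_apply_two_mul] using contDiff_const.mul (hcoord k).cos
  · simpa only [torusGraph_apply_two_mul_add_one] using contDiff_const.mul (hcoord k).sin
  · simpa only [torusGraph_apply_last] using L.contDiff

theorem differentiable_torusGraph : Differentiable ℝ (torusGraph r a L) :=
  (contDiff_torusGraph r a L (p := 1)).differentiable one_ne_zero

theorem fderiv_torusGraph_apply_two_mul (x v : Euc n) (k : Fin n) :
    fderiv ℝ (torusGraph r a L) x v ⟨2 * k, by omega⟩ =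
      -(r * a) * Real.sin (a * x k) * v k := by
  rw [fderiv_euclidean_apply (differentiable_torusGraph r a L x)]
  simp only [torusGraph_apply_two_mul]
  rw [fderiv_comp_coord (φ := fun t => r * Real.cos (a * t)) (by fun_prop),
    deriv_const_mul_cos_mul]

theorem fderiv_torusGraph_apply_two_mul_add_one (x v : Euc n) (k : Fin n) :
    fderiv ℝ (torusGraph r a L) x v ⟨2 * k + 1, by omega⟩ =
      r * a * Real.cos (a * x k) * v k := by
  rw [fderiv_euclidean_apply (differentiable_torusGraph r a L x)]
  simp only [torusGraph_apply_two_mul_add_one]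
  rw [fderiv_comp_coord (φ := fun t => r * Real.sin (a * t)) (by fun_prop),
    deriv_const_mul_sin_mul]

theorem fderiv_torusGraph_apply_last (x v : Euc n) :
    fderiv ℝ (torusGraph r a L) x v (Fin.last (2 * n)) = L v := by
  rw [fderiv_euclidean_apply (differentiable_torusGraph r a L x)]
  simp only [torusGraph_apply_last, L.fderiv]

theorem inner_fderiv_torusGraph (x v w : Euc n) :
    ⟪fderiv ℝ (torusGraph r a L) x v, fderiv ℝ (torusGraph r a L) x w⟫ =
      (r * a) ^ 2 * ⟪v, w⟫ + L v * L w := by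
  rw [PiLp.inner_apply, sum_fin_two_mul_add_one, PiLp.inner_apply, Finset.mul_sum]
  simp only [fderiv_torusGraph_apply_two_mul, fderiv_torusGraph_apply_two_mul_add_one,
    fderiv_torusGraph_apply_last, RCLike.inner_apply, conj_trivial]
  congr 1
  · refine Finset.sum_congr rfl fun k _ => ?_
    linear_combination (r * a) ^ 2 * v k * w k * Real.sin_sq_add_cos_sq (a * x k)
  · ring

theorem sum_sq_torusGraph (x : Euc n) :
    ∑ i : Fin (2 * n), torusGraph r a L x i.castSucc ^ 2 = n * r ^ 2 := by
  have hcircle (k : Fin n) : torusGraph r a L x ⟨2 * k, by omega⟩ ^ 2 +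
      torusGraph r a L x ⟨2 * k + 1, by omega⟩ ^ 2 = r ^ 2 := by
    rw [torusGraph_apply_two_mul, torusGraph_apply_two_mul_add_one]
    linear_combination r ^ 2 * Real.sin_sq_add_cos_sq (a * x k)
  rw [sum_fin_two_mul]
  simp only [Fin.castSucc_mk, hcircle]
  simp

theorem indMetric_torusGraph (x : Euc n) :
    indMetric (torusGraph r a L) x =
      (r * a) ^ 2 • (1 : Matrix (Fin n) (Fin n) ℝ) +
        vecMulVec (fun k => L (EuclideanSpace.single k 1))
          (fun k => L (EuclideanSpace.single k 1)) := by
  ext i j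
  simp [indMetric, pd, inner_fderiv_torusGraph, one_apply, vecMulVec_apply,
    EuclideanSpace.inner_single_right, eq_comm]

variable {r a}

theorem isImmersion_torusGraph (hr : r ≠ 0) (ha : a ≠ 0) : IsImmersion (torusGraph r a L) := by
  refine ⟨contDiff_torusGraph r a L, fun x => ?_⟩
  rw [injective_iff_map_eq_zero]
  intro v hv
  have hnorm : (r * a) ^ 2 * ‖v‖ ^ 2 + L v ^ 2 = 0 := by
    simpa [hv, sq (L v)] using (inner_fderiv_torusGraph r a L x v v).symm
  have hv0 : (r * a) ^ 2 * ‖v‖ ^ 2 = 0 :=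
    ((add_eq_zero_iff_of_nonneg (by positivity) (by positivity)).1 hnorm).1
  simpa [hr, ha] using hv0

variable {L}

theorem inv_indMetric_torusGraph_apply_self (hr : r ≠ 0) (ha : a ≠ 0) (x : Euc n) (k : Fin n) :
    (indMetric (torusGraph r a L) x)⁻¹ k k =
      ((r * a) ^ 2)⁻¹ * (1 - L (EuclideanSpace.single k 1) ^ 2 /
        ((r * a) ^ 2 + ∑ j, L (EuclideanSpace.single j 1) ^ 2)) := by
  have hpos : 0 < (r * a) ^ 2 := by positivity
  have hdot : (fun k => L (EuclideanSpace.single k 1)) ⬝ᵥ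
      (fun k => L (EuclideanSpace.single k 1)) = ∑ j, L (EuclideanSpace.single j 1) ^ 2 := by
    simp only [dotProduct, sq]
  rw [indMetric_torusGraph, inv_smul_one_add_vecMulVec hpos.ne' (by rw [hdot]; positivity), hdot]
  simp [vecMulVec_apply, ← sq, div_eq_inv_mul]

theorem lap_torusGraph_comp_coord (hr : r ≠ 0) (ha : a ≠ 0) {q : ℝ}
    (hL : ∀ k, L (EuclideanSpace.single k 1) ^ 2 = q) {φ : ℝ → ℝ} (hφ : ContDiff ℝ 2 φ)
    (hφ' : ∀ t, deriv (deriv φ) t = -a ^ 2 * φ t) (k : Fin n) (x : Euc n) :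
    lap (torusGraph r a L) (fun y => φ (y k)) x =
      -((1 - q / ((r * a) ^ 2 + n * q)) / r ^ 2) * φ (x k) := by
  rw [lap_comp_coord_of_indMetric_eq (indMetric_torusGraph r a L) hφ,
    ← indMetric_torusGraph r a L x, inv_indMetric_torusGraph_apply_self hr ha, hφ']
  simp only [hL, Finset.sum_const, Finset.card_fin, nsmul_eq_mul]
  field_simp

theorem lapV_torusGraph (hr : r ≠ 0) (ha : a ≠ 0) {q : ℝ}
    (hL : ∀ k, L (EuclideanSpace.single k 1) ^ 2 = q) (x : Euc n) :
    lapV (torusGraph r a L) (torusGraph r a L) x =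
      -((1 - q / ((r * a) ^ 2 + n * q)) / r ^ 2) •
        (torusGraph r a L x -
          ⟪torusGraph r a L x, EuclideanSpace.single (Fin.last (2 * n)) (1 : ℝ)⟫ •
            EuclideanSpace.single (Fin.last (2 * n)) (1 : ℝ)) := by
  ext i
  change lap _ (fun y => torusGraph r a L y i) x = _
  induction i using fin_two_mul_add_one_cases with
  | even k =>
    have hk : (⟨2 * k, by omega⟩ : Fin (2 * n + 1)) ≠ Fin.last (2 * n) :=
      Fin.ne_of_val_ne (show 2 * (k : ℕ) ≠ 2 * n by omega)
    simp only [torusGraph_apply_two_mul]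
    rw [lap_torusGraph_comp_coord (φ := fun t => r * Real.cos (a * t)) hr ha hL (by fun_prop)
      (deriv_deriv_const_mul_cos_mul r a)]
    simp [torusGraph_apply_two_mul, hk]
  | odd k =>
    have hk : (⟨2 * k + 1, by omega⟩ : Fin (2 * n + 1)) ≠ Fin.last (2 * n) :=
      Fin.ne_of_val_ne (show 2 * (k : ℕ) + 1 ≠ 2 * n by omega)
    simp only [torusGraph_apply_two_mul_add_one]
    rw [lap_torusGraph_comp_coord (φ := fun t => r * Real.sin (a * t)) hr ha hL (by fun_prop)
      (deriv_deriv_const_mul_sin_mul r a)]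
    simp [torusGraph_apply_two_mul_add_one, hk]
  | last =>
    simp only [torusGraph_apply_last]
    rw [lap_continuousLinearMap_of_indMetric_eq (indMetric_torusGraph r a L)]
    simp [EuclideanSpace.inner_single_right]

end TorusGraph

theorem eigenvalue_eq_sq {ν a b : ℝ} (hν : 0 < ν) (ha : a ≠ 0) (h : a ^ 2 - ν + 1 ≠ 0)
    (hb : b ^ 2 = a ^ 2 * (ν - a ^ 2) / (ν * (a ^ 2 - ν + 1))) :
    ν * (a ^ 2 + (ν - 1) * b ^ 2) / (a ^ 2 + ν * b ^ 2) = a ^ 2 := by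
  rw [eq_div_iff (mul_ne_zero hν.ne' h)] at hb
  rw [div_eq_iff (by positivity)]
  linear_combination -hb

theorem clifford_example_general {n : ℕ} (hn : 1 ≤ n) {a : ℝ} (ha : a ≠ 0) (b : ℝ)
    (f : Euc n → Euc (2 * n + 1))
    (hf : ∀ x, f x = (WithLp.equiv 2 (Fin (2 * n + 1) → ℝ)).symm fun i =>
      if h : (i : ℕ) < 2 * n then
        (if (i : ℕ) % 2 = 0 then Real.cos (a * x ⟨(i : ℕ) / 2, fin_val_div_two_lt h⟩)
          else Real.sin (a * x ⟨(i : ℕ) / 2, fin_val_div_two_lt h⟩)) / Real.sqrt n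
      else b * (∑ j, x j) / Real.sqrt n) :
    IsImmersion f ∧
      (∀ x, ∑ i : Fin (2 * n), f x i.castSucc ^ 2 = 1) ∧
      (∀ x, lapV f f x = -(n * (a ^ 2 + (n - 1) * b ^ 2) / (a ^ 2 + n * b ^ 2)) •
        (f x - ⟪f x, EuclideanSpace.single (Fin.last (2 * n)) (1 : ℝ)⟫ •
          EuclideanSpace.single (Fin.last (2 * n)) (1 : ℝ))) := by
  have hn0 : (0 : ℝ) < n := by exact_mod_cast hn
  have hr : (Real.sqrt n)⁻¹ ≠ 0 := by positivity
  have hr2 : (Real.sqrt n)⁻¹ ^ 2 = (n : ℝ)⁻¹ := by rw [inv_pow, Real.sq_sqrt hn0.le]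
  let L : Euc n →L[ℝ] ℝ := (b * (Real.sqrt n)⁻¹) • ∑ j, EuclideanSpace.proj j
  have hL (k : Fin n) : L (EuclideanSpace.single k 1) ^ 2 = b ^ 2 / n := by
    simp [L, mul_pow, hr2, div_eq_mul_inv]
  obtain rfl : f = torusGraph (Real.sqrt n)⁻¹ a L := by
    ext x i
    have hLx : L x = b * (Real.sqrt n)⁻¹ * ∑ j, x j := by simp [L]
    simp only [hf, torusGraph, hLx, WithLp.equiv_symm_apply]
    split_ifs <;> ring
  refine ⟨isImmersion_torusGraph L hr ha, fun x => ?_, fun x => ?_⟩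
  · exact (sum_sq_torusGraph _ a L x).trans (by rw [hr2, mul_inv_cancel₀ hn0.ne'])
  · refine (lapV_torusGraph hr ha hL x).trans ?_
    congr 2
    rw [mul_pow, hr2]
    field_simp
    ring

/-- The example: for `√(n−1) < a ≤ √n` and `b² = a²(n−a²)/(n(a²−n+1))`, the map
`f(x) = (1/√n)(cos(ax₁), sin(ax₁), …, cos(axₙ), sin(axₙ), b Σ xⱼ)` is an
(isometric, for the induced metric) immersion of `ℝ^n` into `ℝ^{2n+1}` whose
image lies in the cylinder `𝕊^{2n−1} × ℝ`, and which satisfies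
`Δf = -a²(f − ⟨f, ∂/∂t⟩ ∂/∂t)` where `∂/∂t` is the last coordinate direction. -/
theorem clifford_example {n : ℕ} (hn : 1 ≤ n) (a b : ℝ)
    (ha1 : Real.sqrt ((n : ℝ) - 1) < a) (ha2 : a ≤ Real.sqrt n)
    (hb : b ^ 2 = a ^ 2 * ((n : ℝ) - a ^ 2) / ((n : ℝ) * (a ^ 2 - (n : ℝ) + 1)))
    (f : Euc n → Euc (2 * n + 1))
    (hf : ∀ x, f x = (WithLp.equiv 2 (Fin (2 * n + 1) → ℝ)).symm fun i =>
      if h : (i : ℕ) < 2 * n then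
        (if (i : ℕ) % 2 = 0 then Real.cos (a * x ⟨(i : ℕ) / 2, by omega⟩)
          else Real.sin (a * x ⟨(i : ℕ) / 2, by omega⟩)) / Real.sqrt n
      else b * (∑ j, x j) / Real.sqrt n) :
    IsImmersion f ∧
      (∀ x, ∑ i : Fin (2 * n), (f x (Fin.castLE (by omega) i)) ^ 2 = 1) ∧
      (∀ x, lapV f f x = (-(a ^ 2)) •
        (f x - ⟪f x, EuclideanSpace.single (⟨2 * n, by omega⟩ : Fin (2 * n + 1)) (1 : ℝ)⟫ •
          EuclideanSpace.single (⟨2 * n, by omega⟩ : Fin (2 * n + 1)) (1 : ℝ))) := by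
  have ha : 0 < a := (Real.sqrt_nonneg _).trans_lt ha1
  have hden : a ^ 2 - (n : ℝ) + 1 ≠ 0 := by linarith [(Real.sqrt_lt' ha).1 ha1]
  rw [← eigenvalue_eq_sq (by positivity) ha.ne' hden hb]
  exact clifford_example_general hn ha.ne' b f hf
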